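/- Let (X,Σ,m) be a probability measure space and B a Banach space. Then B is reflexive if and only if L^p(m;B) is reflexive for every p ∈ (1,∞). -/

import Mathlib

open MeasureTheory NormedSpace
open scoped ENNReal

/-!
A failure of reflexivity of a Banach space is witnessed, following James, by bounded sequences of
vectors `x n` and functionals `f n` with `f k (x n)` bounded away from `0` for `k ≤ n` and equal to
`0` for `k > n`. Evaluating a weak-* limit point of `f` at a weak limit point of `x` gives a
contradiction, so a Banach space is reflexive as soon as every sequence lies in a reflexive
subspace. Since a sequence of `L^p` functions takes values in one separable closed subspace, `B` may
be assumed separable when showing that its reflexivity passes to `L^p(m; B)`.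

If `E*` is separable, the dual of `L^p(m; E)` is `L^q(m; E*)`. Given a functional `f`, the density
`g c` of the measure `A ↦ f (𝟙_A • c)` exists for each `c` by Radon–Nikodym. Young's inequality for
simple functions `u`, `f u - ‖u‖ ^ p / p ≤ ‖f‖ ^ q / q`, bounds the integral of the Legendre
transform of `‖·‖ ^ p / p` at `c ↦ g c x`. Hence for almost every `x` the values `g c x` are those
of a functional `r x`, with `‖r x‖ ^ q` integrable. For `B` separable and reflexive, applying this
to `E = B` and to `E = B*` identifies the double dual of `L^p(m; B)` with `L^p(m; B**)`.

Conversely, `B` is isomorphic to the closed subspace of constants of `L^p(m; B)`.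
-/

open Filter Topology TopologicalSpace

section FunctionalAnalysis

variable {𝕜 E F : Type*} [RCLike 𝕜] [NormedAddCommGroup E] [NormedSpace 𝕜 E]
  [NormedAddCommGroup F] [NormedSpace 𝕜 F]

variable (𝕜 E) in
/-- A normed space is reflexive if the canonical inclusion into its double dual is onto. -/
def IsReflexiveSpace : Prop :=
  Function.Surjective (inclusionInDoubleDual 𝕜 E)

theorem IsReflexiveSpace.completeSpace (h : IsReflexiveSpace 𝕜 E) : CompleteSpace E :=
  let e := LinearIsometryEquiv.ofSurjective (inclusionInDoubleDualLi 𝕜) h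
  e.toIsometryEquiv.completeSpace_iff.2 inferInstance

theorem IsReflexiveSpace.of_leftInverse (h : IsReflexiveSpace 𝕜 E) {i : F →L[𝕜] E} {r : E →L[𝕜] F}
    (hri : Function.LeftInverse r i) : IsReflexiveSpace 𝕜 F := by
  intro Φ
  obtain ⟨x, hx⟩ := h (Φ.comp (ContinuousLinearMap.precomp 𝕜 i))
  refine ⟨r x, ContinuousLinearMap.ext fun f ↦ ?_⟩
  have hfri : (f.comp r).comp i = f := ContinuousLinearMap.ext fun y ↦ congrArg f (hri y)
  calc f (r x) = inclusionInDoubleDual 𝕜 E x (f.comp r) := rfl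
    _ = Φ ((f.comp r).comp i) := by rw [hx]; rfl
    _ = Φ f := by rw [hfri]

theorem IsReflexiveSpace.of_continuousLinearEquiv (h : IsReflexiveSpace 𝕜 E) (e : E ≃L[𝕜] F) :
    IsReflexiveSpace 𝕜 F :=
  h.of_leftInverse (i := e.symm) (r := e) e.apply_symm_apply

theorem isReflexiveSpace_range_iff {i : F →L[𝕜] E} (hi : IsEmbedding i) :
    IsReflexiveSpace 𝕜 i.range ↔ IsReflexiveSpace 𝕜 F := by
  let e : F ≃L[𝕜] i.range :=
    { LinearEquiv.ofInjective (i : F →ₗ[𝕜] E) hi.injective with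
      continuous_toFun := i.continuous.subtype_mk _
      continuous_invFun := hi.continuous_iff.2 <| continuous_subtype_val.congr fun y ↦
        (congrArg Subtype.val ((LinearEquiv.ofInjective _ hi.injective).apply_symm_apply y)).symm }
  exact ⟨fun h ↦ h.of_continuousLinearEquiv e.symm, fun h ↦ h.of_continuousLinearEquiv e⟩

theorem exists_strongDual_eq_zero_ne_zero {S : Submodule 𝕜 E} (hS : IsClosed (S : Set E)) {x : E}
    (hx : x ∉ S) : ∃ f : StrongDual 𝕜 E, (∀ y ∈ S, f y = 0) ∧ f x ≠ 0 := by
  obtain ⟨g, hg⟩ := SeparatingDual.exists_ne_zero (R := 𝕜)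
    (x := S.mkQ x) (by simpa using hx)
  refine ⟨g.comp S.mkQL, fun y hy ↦ ?_, hg⟩
  simp [(Submodule.Quotient.mk_eq_zero S).2 hy]

theorem IsReflexiveSpace.of_isClosed (h : IsReflexiveSpace 𝕜 E) {S : Submodule 𝕜 E}
    (hS : IsClosed (S : Set E)) : IsReflexiveSpace 𝕜 S := by
  intro Φ
  obtain ⟨x, hx⟩ := h (Φ.comp (ContinuousLinearMap.precomp 𝕜 S.subtypeL))
  have hΦ (f : StrongDual 𝕜 E) : f x = Φ (f.comp S.subtypeL) := DFunLike.congr_fun hx f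
  have hxS : x ∈ S := by
    by_contra hxS
    obtain ⟨f, hfS, hfx⟩ := exists_strongDual_eq_zero_ne_zero hS hxS
    have hf : f.comp S.subtypeL = 0 := ContinuousLinearMap.ext fun y ↦ hfS y y.2
    exact hfx (by rw [hΦ, hf, map_zero])
  refine ⟨⟨x, hxS⟩, ContinuousLinearMap.ext fun f ↦ ?_⟩
  obtain ⟨g, hg, -⟩ := exists_extension_norm_eq S f
  have hgf : g.comp S.subtypeL = f := ContinuousLinearMap.ext hg
  rw [dual_def, ← hg, hΦ, hgf]

theorem exists_norm_le_one_half_norm_le_norm_apply (f : StrongDual 𝕜 E) :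
    ∃ x : E, ‖x‖ ≤ 1 ∧ ‖f‖ / 2 ≤ ‖f x‖ := by
  rcases (norm_nonneg f).eq_or_lt with hf | hf
  · exact ⟨0, by simp, by simp [← hf]⟩
  · obtain ⟨x, hx, hfx⟩ := f.exists_lt_apply_of_lt_opNorm (half_lt_self hf)
    exact ⟨x, hx.le, hfx.le⟩

theorem separableSpace_of_separableSpace_strongDual [SeparableSpace (StrongDual 𝕜 E)] :
    SeparableSpace E := by
  choose e he hfe using exists_norm_le_one_half_norm_le_norm_apply (𝕜 := 𝕜) (E := E)
  let d := denseSeq (StrongDual 𝕜 E)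
  let S := (Submodule.span 𝕜 (Set.range fun n ↦ e (d n))).topologicalClosure
  have hS (x : E) : x ∈ S := by
    by_contra hx
    obtain ⟨f, hfS, hfx⟩ :=
      exists_strongDual_eq_zero_ne_zero (Submodule.isClosed_topologicalClosure _) hx
    have hf : 0 < ‖f‖ := norm_pos_iff.2 (by rintro rfl; exact hfx rfl)
    obtain ⟨n, hn⟩ := (denseRange_denseSeq (StrongDual 𝕜 E)).exists_dist_lt f
      (by positivity : 0 < ‖f‖ / 4)
    have hfd : ‖d n - f‖ < ‖f‖ / 4 := by rwa [← dist_eq_norm, dist_comm]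
    have hfe0 : f (e (d n)) = 0 :=
      hfS _ (Submodule.le_topologicalClosure _ (Submodule.subset_span ⟨n, rfl⟩))
    have hde : ‖d n (e (d n))‖ ≤ ‖d n - f‖ := by
      simpa [hfe0] using (d n - f).le_opNorm_of_le (he (d n))
    linarith [hfe (d n), norm_le_norm_add_norm_sub' f (d n), norm_sub_rev f (d n)]
  have hsep : IsSeparable (S : Set E) := (Set.countable_range _).isSeparable.span.closure
  rwa [Set.eq_univ_of_forall hS, isSeparable_univ_iff] at hsep

theorem mem_span_of_forall_apply_eq_zero {s : Finset (StrongDual 𝕜 E)} {g : StrongDual 𝕜 E}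
    (h : ∀ x, (∀ f ∈ s, f x = 0) → g x = 0) :
    g ∈ Submodule.span 𝕜 (s : Set (StrongDual 𝕜 E)) := by
  have hg : (g : E →ₗ[𝕜] 𝕜) ∈
      Submodule.span 𝕜 (Set.range fun f : s ↦ (f.1 : E →ₗ[𝕜] 𝕜)) :=
    mem_span_of_iInf_ker_le_ker fun x hx ↦ h x fun f hf ↦
      (Submodule.mem_iInf _).1 hx ⟨f, hf⟩
  have hs : Set.range (fun f : s ↦ (f.1 : E →ₗ[𝕜] 𝕜)) =
      ContinuousLinearMap.coeLM 𝕜 '' (s : Set (StrongDual 𝕜 E)) := by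
    ext; simp
  rw [hs, Submodule.span_image] at hg
  obtain ⟨g', hg', hgg'⟩ := hg
  rwa [← ContinuousLinearMap.coe_injective hgg']

theorem exists_forall_mem_apply_eq (Φ : Module.Dual 𝕜 (StrongDual 𝕜 E))
    (s : Finset (StrongDual 𝕜 E)) : ∃ x, ∀ f ∈ s, f x = Φ f := by
  let W := Submodule.span 𝕜 (s : Set (StrongDual 𝕜 E))
  have : FiniteDimensional 𝕜 W := FiniteDimensional.span_finset 𝕜 s
  let pairing : W →ₗ[𝕜] Module.Dual 𝕜 E := ContinuousLinearMap.coeLM 𝕜 ∘ₗ W.subtype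
  have hpairing : Function.Surjective pairing.flip :=
    (LinearMap.flip_surjective_iff₁ (V₁ := W) (V₂ := E)).2
      (ContinuousLinearMap.coe_injective.comp Subtype.val_injective)
  obtain ⟨x, hx⟩ := hpairing (Φ ∘ₗ W.subtype)
  exact ⟨x, fun f hf ↦ DFunLike.congr_fun hx ⟨f, Submodule.subset_span hf⟩⟩

theorem exists_norm_lt_forall_mem_apply_eq (Φ : StrongDual 𝕜 (StrongDual 𝕜 E))
    (s : Finset (StrongDual 𝕜 E)) {C : ℝ} (hC : ‖Φ‖ < C) :
    ∃ x, ‖x‖ < C ∧ ∀ f ∈ s, f x = Φ f := by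
  obtain ⟨x₀, hx₀⟩ := exists_forall_mem_apply_eq Φ.toLinearMap s
  let N : Submodule 𝕜 E := ⨅ f : s, f.1.ker
  have hN {x : E} : x ∈ N ↔ ∀ f ∈ s, f x = 0 := by simp [N]
  have hNc : IsClosed (N : Set E) := by
    rw [Submodule.coe_iInf]
    exact isClosed_iInter fun f ↦ f.1.isClosed_ker
  obtain ⟨g, hg, hgx⟩ := exists_dual_vector'' 𝕜 (N.mkQ x₀)
  let h := g.comp N.mkQL
  have hh : ‖h‖ ≤ 1 := h.opNorm_le_bound zero_le_one fun x ↦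
    (g.le_of_opNorm_le hg _).trans (by gcongr; exact Submodule.Quotient.norm_mk_le N x)
  have hhs : h ∈ Submodule.span 𝕜 (s : Set (StrongDual 𝕜 E)) :=
    mem_span_of_forall_apply_eq_zero fun x hx ↦ by
      simp [h, (Submodule.Quotient.mk_eq_zero N).2 (hN.2 hx)]
  have hhx : h x₀ = Φ h := LinearMap.eqOn_span
    (f := (inclusionInDoubleDual 𝕜 E x₀ : StrongDual 𝕜 E →ₗ[𝕜] 𝕜))
    (g := (Φ : StrongDual 𝕜 E →ₗ[𝕜] 𝕜)) hx₀ hhs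
  have hx₀C : ‖N.mkQ x₀‖ < C := calc
    ‖N.mkQ x₀‖ = ‖g (N.mkQ x₀)‖ := by rw [hgx, RCLike.norm_ofReal, abs_norm]
    _ = ‖Φ h‖ := congrArg norm hhx
    _ ≤ ‖Φ‖ := by simpa using Φ.le_opNorm_of_le hh
    _ < C := hC
  obtain ⟨x, hx, hxC⟩ := Submodule.Quotient.norm_mk_lt (N.mkQ x₀) (sub_pos.2 hx₀C)
  refine ⟨x, by linarith, fun f hf ↦ ?_⟩
  have := hN.1 ((Submodule.Quotient.eq N).1 hx) f hf
  rw [← sub_eq_zero]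
  simpa [hx₀ f hf] using this

theorem exists_norm_le_one_forall_mem_apply_eq_zero {f : StrongDual 𝕜 E}
    {s : Finset (StrongDual 𝕜 E)} {θ : ℝ}
    (hf : ∀ g ∈ Submodule.span 𝕜 (s : Set (StrongDual 𝕜 E)), θ < ‖f - g‖) :
    ∃ x, ‖x‖ ≤ 1 ∧ (∀ g ∈ s, g x = 0) ∧ θ < ‖f x‖ := by
  let N : Submodule 𝕜 E := ⨅ g : s, g.1.ker
  have hN {x : E} : x ∈ N ↔ ∀ g ∈ s, g x = 0 := by simp [N]
  obtain ⟨f', hf', hf'norm⟩ := exists_extension_norm_eq N (f.comp N.subtypeL)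
  have hspan : f - f' ∈ Submodule.span 𝕜 (s : Set (StrongDual 𝕜 E)) :=
    mem_span_of_forall_apply_eq_zero fun x hx ↦ sub_eq_zero.2 (hf' ⟨x, hN.2 hx⟩).symm
  have hθ : θ < ‖f.comp N.subtypeL‖ := by
    simpa [← hf'norm] using hf _ hspan
  obtain ⟨x, hx, hθx⟩ := (f.comp N.subtypeL).exists_lt_apply_of_lt_opNorm hθ
  exact ⟨x, hx.le, hN.1 x.2, hθx⟩

theorem exists_pos_forall_lt_norm_sub_of_notMem {G : Type*} [SeminormedAddCommGroup G] {s : Set G}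
    (hs : IsClosed s) (hne : s.Nonempty) {z : G} (hz : z ∉ s) : ∃ θ > 0, ∀ y ∈ s, θ < ‖z - y‖ := by
  have hpos := (hs.notMem_iff_infDist_pos hne).1 hz
  refine ⟨_, half_pos hpos, fun y hy ↦ (half_lt_self hpos).trans_le ?_⟩
  exact (Metric.infDist_le_dist_of_mem hy).trans_eq (dist_eq_norm z y)

theorem isClosed_range_inclusionInDoubleDual [CompleteSpace E] :
    IsClosed (Set.range (inclusionInDoubleDual 𝕜 E)) :=
  (inclusionInDoubleDualLi (E := E) 𝕜).isometry.isUniformInducing.isComplete_range.isClosed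

/-- The triangular systems of vectors and functionals by which James characterises the
non-reflexive Banach spaces. -/
structure IsJamesPair (θ C : ℝ) (x : ℕ → E) (f : ℕ → StrongDual 𝕜 E) : Prop where
  norm_vec_le (n : ℕ) : ‖x n‖ ≤ C
  norm_functional_le (n : ℕ) : ‖f n‖ ≤ 1
  le_norm_apply {k n : ℕ} : k ≤ n → θ ≤ ‖f k (x n)‖
  apply_eq_zero {k n : ℕ} : k < n → f n (x k) = 0

theorem exists_isJamesPair [CompleteSpace E] (hE : ¬IsReflexiveSpace 𝕜 E) :
    ∃ (θ C : ℝ) (x : ℕ → E) (f : ℕ → StrongDual 𝕜 E), 0 < θ ∧ IsJamesPair θ C x f := by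
  classical
  obtain ⟨Φ, hΦ⟩ : ∃ Φ, Φ ∉ Set.range (inclusionInDoubleDual 𝕜 E) := not_forall.1 hE
  obtain ⟨θ, hθ, hθΦ⟩ :=
    exists_pos_forall_lt_norm_sub_of_notMem isClosed_range_inclusionInDoubleDual
      (Set.range_nonempty _) hΦ
  simp only [Set.forall_mem_range] at hθΦ
  obtain ⟨z, hz, hzz⟩ := exists_seq_of_forall_finset_exists
    (fun z : E × StrongDual 𝕜 E ↦ ‖z.1‖ ≤ ‖Φ‖ + 1 ∧ ‖z.2‖ ≤ 1 ∧ θ < ‖Φ z.2‖ ∧ z.2 z.1 = Φ z.2)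
    (fun z w ↦ z.2 w.1 = Φ z.2 ∧ w.2 z.1 = 0) fun s _ ↦ by
      obtain ⟨f, hf, hfs, hfθ⟩ := exists_norm_le_one_forall_mem_apply_eq_zero (f := Φ) (θ := θ)
        (s := (s.image Prod.fst).image (inclusionInDoubleDual 𝕜 E)) fun Ψ hΨ ↦ by
          rw [Finset.coe_image, ← ContinuousLinearMap.coe_coe, Submodule.span_image] at hΨ
          obtain ⟨x, -, rfl⟩ := hΨ
          exact hθΦ x
      obtain ⟨x, hx, hxs⟩ := exists_norm_lt_forall_mem_apply_eq Φ (insert f (s.image Prod.snd))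
        (lt_add_one _)
      simp only [Finset.forall_mem_insert, Finset.forall_mem_image] at hfs hxs
      exact ⟨(x, f), ⟨hx.le, hf, hfθ, hxs.1⟩, fun w hw ↦ ⟨hxs.2 hw, hfs hw⟩⟩
  refine ⟨θ, ‖Φ‖ + 1, fun n ↦ (z n).1, fun n ↦ (z n).2, hθ, fun n ↦ (hz n).1, fun n ↦ (hz n).2.1,
    fun {k n} hkn ↦ ?_, fun hkn ↦ (hzz _ _ hkn).2⟩
  have hzΦ : (z k).2 (z n).1 = Φ (z k).2 := by
    rcases hkn.eq_or_lt with rfl | hkn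
    · exact (hz k).2.2.2
    · exact (hzz k n hkn).1
  exact hzΦ ▸ (hz k).2.2.1.le

theorem exists_forall_tendsto_apply_of_norm_le {ι : Type*} (U : Ultrafilter ι)
    {f : ι → StrongDual 𝕜 E} {C : ℝ} (hf : ∀ i, ‖f i‖ ≤ C) :
    ∃ g : StrongDual 𝕜 E, ∀ x, Tendsto (fun i ↦ f i x) U (𝓝 (g x)) := by
  obtain ⟨g, -, hg⟩ := (WeakDual.isCompact_closedBall (𝕜 := 𝕜) (E := E) 0 C).ultrafilter_le_nhds
    (U.map fun i ↦ StrongDual.toWeakDual (f i))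
    (le_principal_iff.2 (mem_map.2 (univ_mem' fun i ↦ mem_closedBall_zero_iff.2 (hf i))))
  exact ⟨WeakDual.toStrongDual g, fun x ↦ ((WeakDual.eval_continuous x).tendsto g).comp hg⟩

theorem IsReflexiveSpace.exists_forall_tendsto_apply {ι : Type*} (h : IsReflexiveSpace 𝕜 E)
    (U : Ultrafilter ι) {x : ι → E} {C : ℝ} (hx : ∀ i, ‖x i‖ ≤ C) :
    ∃ y, ∀ f : StrongDual 𝕜 E, Tendsto (fun i ↦ f (x i)) U (𝓝 (f y)) := by
  obtain ⟨Φ, hΦ⟩ := exists_forall_tendsto_apply_of_norm_le U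
    (f := fun i ↦ inclusionInDoubleDual 𝕜 E (x i))
    fun i ↦ (double_dual_bound 𝕜 E (x i)).trans (hx i)
  obtain ⟨y, rfl⟩ := h Φ
  exact ⟨y, hΦ⟩

theorem IsReflexiveSpace.of_forall_seq_mem [CompleteSpace E]
    (h : ∀ x : ℕ → E, ∃ M : Submodule 𝕜 E, IsReflexiveSpace 𝕜 M ∧ ∀ n, x n ∈ M) :
    IsReflexiveSpace 𝕜 E := by
  by_contra hE
  obtain ⟨θ, C, x, f, hθ, hxf⟩ := exists_isJamesPair hE
  obtain ⟨M, hM, hxM⟩ := h x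
  let U : Ultrafilter ℕ := hyperfilter ℕ
  have hU : (U : Filter ℕ) ≤ atTop := Nat.hyperfilter_le_atTop
  obtain ⟨⟨y, hyM⟩, hy⟩ := hM.exists_forall_tendsto_apply U (x := fun n ↦ ⟨x n, hxM n⟩)
    hxf.norm_vec_le
  have hxy (φ : StrongDual 𝕜 E) : Tendsto (fun n ↦ φ (x n)) U (𝓝 (φ y)) :=
    hy (φ.comp M.subtypeL)
  obtain ⟨g, hg⟩ := exists_forall_tendsto_apply_of_norm_le U hxf.norm_functional_le
  have hgx (k : ℕ) : g (x k) = 0 := tendsto_nhds_unique (hg (x k)) <|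
    tendsto_const_nhds.congr' <| hU <| (eventually_gt_atTop k).mono fun n hkn ↦
      (hxf.apply_eq_zero hkn).symm
  have hgy : g y = 0 := tendsto_nhds_unique (hxy g) (by simp [hgx])
  have hfy (k : ℕ) : θ ≤ ‖f k y‖ := ge_of_tendsto (hxy (f k)).norm <| hU <|
    (eventually_ge_atTop k).mono fun n hkn ↦ hxf.le_norm_apply hkn
  have hgθ : θ ≤ ‖g y‖ := ge_of_tendsto (hg y).norm (.of_forall hfy)
  rw [hgy, norm_zero] at hgθ
  exact hθ.not_ge hgθ

end FunctionalAnalysis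

section DualDensity

variable {X E : Type*} [MeasurableSpace X] {m : Measure X} [IsFiniteMeasure m]
  [NormedAddCommGroup E] {p : ℝ≥0∞}

theorem tendsto_measure_iUnion_sdiff_biUnion_finset {A : ℕ → Set X}
    (hA : ∀ i, MeasurableSet (A i)) (hd : Pairwise (Function.onFun Disjoint A)) :
    Tendsto (fun s : Finset ℕ ↦ m ((⋃ i, A i) \ ⋃ i ∈ s, A i)) atTop (𝓝 0) := by
  have hsum : ∑' i, m (A i) ≠ ∞ := by
    rw [← measure_iUnion hd hA]
    exact measure_ne_top _ _
  refine tendsto_of_tendsto_of_tendsto_of_le_of_le tendsto_const_nhds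
    (ENNReal.tendsto_tsum_compl_atTop_zero hsum) (fun _ ↦ bot_le) fun s ↦ ?_
  refine (measure_mono ?_).trans (measure_iUnion_le fun i : {i // i ∉ s} ↦ A i)
  rintro x ⟨hx, hxs⟩
  obtain ⟨i, hi⟩ := Set.mem_iUnion.1 hx
  exact Set.mem_iUnion.2 ⟨⟨i, fun his ↦ hxs (Set.mem_biUnion his hi)⟩, hi⟩

theorem indicatorConstLp_biUnion_finset {ι : Type*} {A : ι → Set X}
    (hA : ∀ i, MeasurableSet (A i)) (hd : Pairwise (Function.onFun Disjoint A)) (s : Finset ι)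
    (c : E) :
    indicatorConstLp p (s.measurableSet_biUnion fun i _ ↦ hA i) (measure_ne_top m _) c =
      ∑ i ∈ s, indicatorConstLp p (hA i) (measure_ne_top m _) c := by
  classical
  induction s using Finset.induction_on with
  | empty => simp
  | insert i s hi ih =>
    have hdisj : Disjoint (A i) (⋃ j ∈ s, A j) :=
      Set.disjoint_iUnion₂_right.2 fun j hj ↦ hd (ne_of_mem_of_not_mem hj hi).symm
    simp only [Finset.set_biUnion_insert, Finset.sum_insert hi]
    rw [← ih, indicatorConstLp_disjoint_union _ _ _ _ hdisj]

variable [Fact (1 ≤ p)]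

theorem hasSum_indicatorConstLp (hp : p ≠ ∞) {A : ℕ → Set X} (hA : ∀ i, MeasurableSet (A i))
    (hd : Pairwise (Function.onFun Disjoint A)) (c : E) :
    HasSum (fun i ↦ indicatorConstLp p (hA i) (measure_ne_top m _) c)
      (indicatorConstLp p (.iUnion hA) (measure_ne_top m _) c) := by
  have hsub (s : Finset ℕ) : ⋃ i ∈ s, A i ⊆ ⋃ i, A i :=
    Set.iUnion₂_subset fun i _ ↦ Set.subset_iUnion A i
  have hlim := tendsto_measure_iUnion_sdiff_biUnion_finset (m := m) hA hd
  refine (tendsto_indicatorConstLp_set (p := p) (c := c) hp (hμt := fun _ ↦ measure_ne_top m _)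
    (ht := fun s ↦ s.measurableSet_biUnion fun i _ ↦ hA i) ?_).congr
      (indicatorConstLp_biUnion_finset hA hd · c)
  simpa only [symmDiff_of_le (hsub _), SummationFilter.unconditional_filter] using hlim

open Classical in
/-- The vector measure `A ↦ 𝟙_A • c` with values in `L^p`. As for every `VectorMeasure`, its value
on a nonmeasurable set is `0`. -/
noncomputable def indicatorVectorMeasure (m : Measure X) [IsFiniteMeasure m] (hp : p ≠ ∞) (c : E) :
    VectorMeasure X (Lp E p m) where
  measureOf' A := if hA : MeasurableSet A then indicatorConstLp p hA (measure_ne_top m A) c else 0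
  empty' := by simp
  not_measurable' _ hA := dif_neg hA
  m_iUnion' A hA hd := by
    simpa only [dif_pos, hA, MeasurableSet.iUnion hA] using! hasSum_indicatorConstLp hp hA hd c

theorem indicatorVectorMeasure_apply (hp : p ≠ ∞) (c : E) {A : Set X} (hA : MeasurableSet A) :
    indicatorVectorMeasure m hp c A = indicatorConstLp p hA (measure_ne_top m A) c :=
  dif_pos hA

variable [NormedSpace ℝ E]

variable (m p) in
/-- `indicatorConstLp` on a finite measure space, as a continuous linear map of the constant. -/
noncomputable def indicatorConstLpL {A : Set X} (hA : MeasurableSet A) : E →L[ℝ] Lp E p m :=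
  LinearMap.mkContinuous
    { toFun := indicatorConstLp p hA (measure_ne_top m A)
      map_add' := fun _ _ ↦ indicatorConstLp_add.symm
      map_smul' := fun t c ↦ MemLp.toLp_congr (memLp_indicator_const p hA (t • c)
        (.inr (measure_ne_top m A))) ((memLp_indicator_const p hA c
        (.inr (measure_ne_top m A))).const_smul t)
        (.of_forall (congrFun (Set.indicator_const_smul A t fun _ ↦ c))) }
    (m.real A ^ (1 / p.toReal)) fun c ↦ by
      rw [mul_comm]
      exact norm_indicatorConstLp_le (hs := hA) (hμs := measure_ne_top m A)

theorem indicatorConstLpL_apply {A : Set X} (hA : MeasurableSet A) (c : E) :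
    indicatorConstLpL m p hA c = indicatorConstLp p hA (measure_ne_top m A) c := rfl

/-- The scalar measure `A ↦ f (𝟙_A • c)` attached to a functional `f` on `L^p` and a vector `c`. -/
noncomputable def dualSignedMeasure (hp : p ≠ ∞) (f : StrongDual ℝ (Lp E p m)) (c : E) :
    SignedMeasure X :=
  (indicatorVectorMeasure m hp c).mapRange (f : Lp E p m →+ ℝ) f.continuous

theorem dualSignedMeasure_apply (hp : p ≠ ∞) (f : StrongDual ℝ (Lp E p m)) (c : E) {A : Set X}
    (hA : MeasurableSet A) :
    dualSignedMeasure hp f c A = f (indicatorConstLp p hA (measure_ne_top m A) c) :=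
  congrArg f (indicatorVectorMeasure_apply hp c hA)

theorem dualSignedMeasure_absolutelyContinuous (hp : p ≠ ∞) (f : StrongDual ℝ (Lp E p m)) (c : E) :
    dualSignedMeasure hp f c ≪ᵥ m.toENNRealVectorMeasure := by
  refine VectorMeasure.AbsolutelyContinuous.mk fun A hA hmA ↦ ?_
  rw [Measure.toENNRealVectorMeasure_apply_measurable hA] at hmA
  have hzero : indicatorConstLp p hA (measure_ne_top m A) c = 0 :=
    Lp.ext <| (indicatorConstLp_coeFn.trans (indicator_meas_zero hmA)).trans (Lp.coeFn_zero ..).symm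
  rw [dualSignedMeasure_apply hp f c hA, hzero, map_zero]

theorem setIntegral_rnDeriv_dualSignedMeasure (hp : p ≠ ∞) (f : StrongDual ℝ (Lp E p m)) (c : E)
    {A : Set X} (hA : MeasurableSet A) :
    ∫ x in A, (dualSignedMeasure hp f c).rnDeriv m x ∂m =
      f (indicatorConstLp p hA (measure_ne_top m A) c) := by
  rw [← withDensityᵥ_apply (SignedMeasure.integrable_rnDeriv _ _) hA,
    SignedMeasure.withDensityᵥ_rnDeriv_eq _ _ (dualSignedMeasure_absolutelyContinuous hp f c),
    dualSignedMeasure_apply hp f c hA]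

end DualDensity

section SimpleSelection

variable {X ι : Type*} [MeasurableSpace X]

theorem exists_simpleFunc_forall_le {α : Type*} [TopologicalSpace α] [LinearOrder α]
    [OrderClosedTopology α] [SecondCountableTopology α] [MeasurableSpace α]
    [OpensMeasurableSpace α] {φ : ι → X → α} (hφ : ∀ i, Measurable (φ i)) {t : Finset ι}
    (ht : t.Nonempty) : ∃ σ : SimpleFunc X ι, ∀ i ∈ t, ∀ x, φ i x ≤ φ (σ x) x := by
  classical
  induction ht using Finset.Nonempty.cons_induction with
  | singleton i => exact ⟨.const X i, by simp⟩
  | cons i t _ _ ih =>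
    obtain ⟨σ, hσ⟩ := ih
    have hA : MeasurableSet {x | φ (σ x) x ≤ φ i x} :=
      measurableSet_le (σ.measurable_bind φ hφ) (hφ i)
    refine ⟨SimpleFunc.piecewise _ hA (.const X i) σ, fun j hj x ↦ ?_⟩
    by_cases hx : φ (σ x) x ≤ φ i x
    · rcases Finset.mem_cons.1 hj with rfl | hj
      · simp [hx]
      · simpa [hx] using (hσ j hj x).trans hx
    · rcases Finset.mem_cons.1 hj with rfl | hj
      · simpa [hx] using le_of_not_ge hx
      · simpa [hx] using hσ j hj x

theorem sum_range_indicator_preimage {M : Type*} [AddCommMonoid M] (σ : SimpleFunc X ι)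
    (h : ι → X → M) (x : X) :
    ∑ i ∈ σ.range, (σ ⁻¹' {i}).indicator (h i) x = h (σ x) x := by
  classical
  rw [Finset.sum_eq_single_of_mem (σ x) (σ.mem_range_self x) fun i _ hi ↦ by simp [hi.symm]]
  simp

variable {E : Type*} [NormedAddCommGroup E] {m : Measure X}

theorem integrable_apply_simpleFunc {k : ι → X → E} (hk : ∀ i, Integrable (k i) m)
    (σ : SimpleFunc X ι) : Integrable (fun x ↦ k (σ x) x) m := by
  simp only [← sum_range_indicator_preimage σ k]
  exact integrable_finsetSum _ fun i _ ↦ (hk i).indicator (σ.measurableSet_fiber i)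

theorem integral_apply_simpleFunc [NormedSpace ℝ E] {k : ι → X → E} (hk : ∀ i, Integrable (k i) m)
    (σ : SimpleFunc X ι) :
    ∫ x, k (σ x) x ∂m = ∑ i ∈ σ.range, ∫ x in σ ⁻¹' {i}, k i x ∂m := by
  simp only [← sum_range_indicator_preimage σ k,
    ← integral_indicator (σ.measurableSet_fiber _)]
  exact integral_finsetSum _ fun i _ ↦ (hk i).indicator (σ.measurableSet_fiber i)

theorem sum_indicatorConstLp_preimage_ae_eq [IsFiniteMeasure m] {p : ℝ≥0∞} (σ : SimpleFunc X ι)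
    (w : ι → E) :
    ⇑(∑ i ∈ σ.range, indicatorConstLp p (σ.measurableSet_fiber i) (measure_ne_top m _) (w i))
      =ᵐ[m] fun x ↦ w (σ x) := by
  have hcoe : ∀ᵐ x ∂m, ∀ i ∈ σ.range,
      indicatorConstLp p (σ.measurableSet_fiber i) (measure_ne_top m _) (w i) x =
        (σ ⁻¹' {i}).indicator (fun _ ↦ w i) x :=
    (Finset.eventually_all _).2 fun i _ ↦ indicatorConstLp_coeFn
  filter_upwards [hcoe, Lp.coeFn_fun_finsetSum σ.range fun i ↦
    indicatorConstLp p (σ.measurableSet_fiber i) (measure_ne_top m _) (w i)] with x hx hsum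
  rw [hsum, Finset.sum_congr rfl hx, sum_range_indicator_preimage σ (fun i _ ↦ w i)]

end SimpleSelection

section LegendreBound

theorem norm_rpow_eq_integral_norm_rpow {X E : Type*} [MeasurableSpace X] {m : Measure X}
    [NormedAddCommGroup E] {p : ℝ≥0∞} [Fact (1 ≤ p)] (hp : p ≠ ∞) (u : Lp E p m) :
    ‖u‖ ^ p.toReal = ∫ x, ‖u x‖ ^ p.toReal ∂m := by
  have hp0 : p ≠ 0 := (zero_lt_one.trans_le Fact.out).ne'
  have hnonneg : 0 ≤ ∫ x, ‖u x‖ ^ p.toReal ∂m := integral_nonneg fun x ↦ by positivity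
  rw [Lp.norm_def, (Lp.memLp u).eLpNorm_eq_integral_rpow_norm hp0 hp,
    ENNReal.toReal_ofReal (Real.rpow_nonneg hnonneg _),
    Real.rpow_inv_rpow hnonneg (ENNReal.toReal_ne_zero.2 ⟨hp0, hp⟩)]

variable {X E ι : Type*} [MeasurableSpace X] {m : Measure X} [IsFiniteMeasure m]
  [NormedAddCommGroup E] [NormedSpace ℝ E] {p : ℝ≥0∞} [Fact (1 ≤ p)]
  {f : StrongDual ℝ (Lp E p m)} {w : ι → E} {k : ι → X → ℝ} {Q : ℝ}

theorem integral_apply_simpleFunc_sub_le (hp : p ≠ ∞) (hQ : p.toReal.HolderConjugate Q)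
    (hki : ∀ i, Integrable (k i) m)
    (hk : ∀ i A (hA : MeasurableSet A),
      ∫ x in A, k i x ∂m = f (indicatorConstLp p hA (measure_ne_top m A) (w i)))
    (σ : SimpleFunc X ι) :
    ∫ x, (k (σ x) x - ‖w (σ x)‖ ^ p.toReal / p.toReal) ∂m ≤ ‖f‖ ^ Q / Q := by
  set u : Lp E p m :=
    ∑ i ∈ σ.range, indicatorConstLp p (σ.measurableSet_fiber i) (measure_ne_top m _) (w i)
  have hu : u =ᵐ[m] fun x ↦ w (σ x) := sum_indicatorConstLp_preimage_ae_eq σ w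
  have hfu : ∫ x, k (σ x) x ∂m = f u := by
    rw [integral_apply_simpleFunc hki, map_sum]
    exact Finset.sum_congr rfl fun i _ ↦ hk i _ (σ.measurableSet_fiber i)
  have hnorm : ∫ x, ‖w (σ x)‖ ^ p.toReal ∂m = ‖u‖ ^ p.toReal := by
    rw [norm_rpow_eq_integral_norm_rpow hp]
    exact integral_congr_ae (hu.mono fun x hx ↦ by simp only [hx])
  have hint : Integrable (fun x ↦ ‖w (σ x)‖ ^ p.toReal / p.toReal) m :=
    integrable_apply_simpleFunc (fun i ↦ integrable_const (‖w i‖ ^ p.toReal / p.toReal)) σ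
  have hyoung : f u ≤ ‖u‖ ^ p.toReal / p.toReal + ‖f‖ ^ Q / Q :=
    calc f u ≤ ‖f‖ * ‖u‖ := (le_abs_self _).trans (f.le_opNorm u)
      _ = ‖u‖ * ‖f‖ := mul_comm _ _
      _ ≤ _ := Real.young_inequality_of_nonneg (norm_nonneg _) (norm_nonneg _) hQ
  rw [integral_sub (integrable_apply_simpleFunc hki σ) hint, hfu, integral_div, hnorm]
  linarith

theorem lintegral_iSup_ofReal_sub_le [Countable ι] (hp : p ≠ ∞) (hQ : p.toReal.HolderConjugate Q)
    (hki : ∀ i, Integrable (k i) m) (hkm : ∀ i, Measurable (k i))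
    (hk : ∀ i A (hA : MeasurableSet A),
      ∫ x in A, k i x ∂m = f (indicatorConstLp p hA (measure_ne_top m A) (w i)))
    {i₀ : ι} (hi₀ : ∀ x, ‖w i₀‖ ^ p.toReal / p.toReal ≤ k i₀ x) :
    ∫⁻ x, ⨆ i, ENNReal.ofReal (k i x - ‖w i‖ ^ p.toReal / p.toReal) ∂m ≤
      ENNReal.ofReal (‖f‖ ^ Q / Q) := by
  classical
  let φ (i : ι) (x : X) : ℝ := k i x - ‖w i‖ ^ p.toReal / p.toReal
  have hφ (i : ι) : Measurable (φ i) := (hkm i).sub_const _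
  have hφi (i : ι) : Integrable (φ i) m := (hki i).sub (integrable_const _)
  have hsup (t : Finset ι) : Measurable fun x ↦ ⨆ i ∈ t, ENNReal.ofReal (φ i x) :=
    .biSup _ t.countable_toSet fun i _ ↦ (hφ i).ennreal_ofReal
  have hmono : Monotone fun (t : Finset ι) x ↦ ⨆ i ∈ t, ENNReal.ofReal (φ i x) :=
    fun s t hst x ↦ biSup_mono hst
  rw [lintegral_congr fun x ↦ iSup_eq_iSup_finset fun i ↦ ENNReal.ofReal (φ i x),
    lintegral_iSup_directed_of_measurable hsup hmono.directed_le]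
  refine iSup_le fun t ↦ ?_
  obtain ⟨σ, hσ⟩ := exists_simpleFunc_forall_le hφ (Finset.insert_nonempty i₀ t)
  have hσ0 (x : X) : 0 ≤ φ (σ x) x :=
    (sub_nonneg.2 (hi₀ x)).trans (hσ i₀ (Finset.mem_insert_self _ _) x)
  calc ∫⁻ x, ⨆ i ∈ t, ENNReal.ofReal (φ i x) ∂m
      ≤ ∫⁻ x, ENNReal.ofReal (φ (σ x) x) ∂m := lintegral_mono fun x ↦ iSup₂_le fun i hi ↦
        ENNReal.ofReal_le_ofReal (hσ i (Finset.mem_insert_of_mem hi) x)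
    _ = ENNReal.ofReal (∫ x, φ (σ x) x ∂m) := (ofReal_integral_eq_lintegral_ofReal
        (integrable_apply_simpleFunc hφi σ) (.of_forall hσ0)).symm
    _ ≤ ENNReal.ofReal (‖f‖ ^ Q / Q) :=
        ENNReal.ofReal_le_ofReal (integral_apply_simpleFunc_sub_le hp hQ hki hk σ)

end LegendreBound

section MomentProblem

theorem le_rpow_mul_of_forall_mul_le_add_rpow_div {P Q H a b : ℝ} (hPQ : P.HolderConjugate Q)
    (hH : 0 < H) (hb : 0 ≤ b) (h : ∀ t > 0, t * a ≤ H + (t * b) ^ P / P) :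
    a ≤ (Q * H) ^ Q⁻¹ * b := by
  have hQH : 0 < Q * H := mul_pos hPQ.symm.pos hH
  rcases hb.eq_or_lt with rfl | hb
  · by_contra! ha
    rw [mul_zero] at ha
    have := h (2 * H / a) (by positivity)
    rw [div_mul_cancel₀ _ ha.ne', mul_zero, Real.zero_rpow hPQ.ne_zero, zero_div] at this
    linarith
  · set s := (Q * H) ^ P⁻¹
    have hs : 0 < s := Real.rpow_pos_of_pos hQH _
    have hsP : s ^ P = Q * H := Real.rpow_inv_rpow hQH.le hPQ.ne_zero
    have hsQ : s * (Q * H) ^ Q⁻¹ = Q * H := by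
      rw [← Real.rpow_add hQH, hPQ.inv_add_inv_eq_one, Real.rpow_one]
    have hmul : s / b * a ≤ s * (Q * H) ^ Q⁻¹ :=
      calc s / b * a ≤ H + (s / b * b) ^ P / P := h _ (div_pos hs hb)
        _ = Q * H * (P⁻¹ + Q⁻¹) := by
          rw [div_mul_cancel₀ _ hb.ne', hsP]
          field_simp [hPQ.ne_zero, hPQ.symm.ne_zero]
          ring
        _ = s * (Q * H) ^ Q⁻¹ := by rw [hPQ.inv_add_inv_eq_one, mul_one, hsQ]
    rwa [div_mul_eq_mul_div, mul_div_assoc, mul_le_mul_iff_right₀ hs, div_le_iff₀ hb] at hmul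

theorem forall_le_of_forall_rat_le {κ : Type*} {F G : (κ → ℝ) → ℝ} (hF : Continuous F)
    (hG : Continuous G) (h : ∀ a : κ → ℚ, F (fun n ↦ a n) ≤ G fun n ↦ a n) (c : κ → ℝ) :
    F c ≤ G c :=
  (DenseRange.piMap fun _ : κ ↦ Rat.denseRange_cast).induction_on c (isClosed_le hF hG) h

variable {E ι : Type*} [NormedAddCommGroup E] [NormedSpace ℝ E] {e : ι → E}

theorem exists_strongDual_apply_eq_of_forall_le
    (he : DenseRange (Finsupp.linearCombination ℝ e)) {γ : ι → ℝ} {C : ℝ} (hC : 0 ≤ C)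
    (h : ∀ c, Finsupp.linearCombination ℝ γ c ≤ C * ‖Finsupp.linearCombination ℝ e c‖) :
    ∃ r : StrongDual ℝ E, (∀ i, r (e i) = γ i) ∧ ‖r‖ ≤ C := by
  have hnorm (c : ι →₀ ℝ) :
      ‖Finsupp.linearCombination ℝ γ c‖ ≤ C * ‖Finsupp.linearCombination ℝ e c‖ :=
    abs_le'.2 ⟨h c, by simpa only [map_neg, norm_neg] using h (-c)⟩
  refine ⟨(Finsupp.linearCombination ℝ γ).extendOfNorm (Finsupp.linearCombination ℝ e),
    fun i ↦ ?_, LinearMap.opNorm_extendOfNorm_le he hC hnorm⟩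
  simpa only [Finsupp.linearCombination_single, one_smul] using
    LinearMap.extendOfNorm_eq he ⟨C, hnorm⟩ (Finsupp.single i 1)

theorem exists_strongDual_norm_rpow_le {P Q H : ℝ} (hPQ : P.HolderConjugate Q) (hH : 0 < H)
    (he : DenseRange (Finsupp.linearCombination ℝ e)) {γ : ι → ℝ}
    (h : ∀ (t : Finset ι) (a : t → ℚ),
      ∑ n, (a n : ℝ) * γ n - ‖∑ n, (a n : ℝ) • e n‖ ^ P / P ≤ H) :
    ∃ r : StrongDual ℝ E, (∀ i, r (e i) = γ i) ∧ ‖r‖ ^ Q ≤ Q * H := by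
  have hQH : 0 ≤ Q * H := (mul_pos hPQ.symm.pos hH).le
  have hreal (t : Finset ι) (c : t → ℝ) :
      ∑ n, c n * γ n ≤ H + ‖∑ n, c n • e n‖ ^ P / P := by
    have := hPQ.nonneg
    exact forall_le_of_forall_rat_le (F := fun c : t → ℝ ↦ ∑ n, c n * γ n)
      (G := fun c ↦ H + ‖∑ n, c n • e n‖ ^ P / P) (by fun_prop)
      (by fun_prop (disch := assumption)) (fun a ↦ sub_le_iff_le_add.1 (h t a)) c
  have hfinsupp (c : ι →₀ ℝ) : Finsupp.linearCombination ℝ γ c ≤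
      H + ‖Finsupp.linearCombination ℝ e c‖ ^ P / P := by
    have hsupp := hreal c.support fun n ↦ c n
    rwa [Finset.sum_coe_sort c.support fun n ↦ c n * γ n,
      Finset.sum_coe_sort c.support fun n ↦ c n • e n] at hsupp
  obtain ⟨r, hr, hrC⟩ := exists_strongDual_apply_eq_of_forall_le he
    (γ := γ) (Real.rpow_nonneg hQH Q⁻¹) fun c ↦
      le_rpow_mul_of_forall_mul_le_add_rpow_div hPQ hH (norm_nonneg _) fun t ht ↦ by
        simpa only [map_smul, smul_eq_mul, norm_smul, Real.norm_of_nonneg ht.le]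
          using hfinsupp (t • c)
  refine ⟨r, hr, ?_⟩
  calc ‖r‖ ^ Q ≤ ((Q * H) ^ Q⁻¹) ^ Q :=
        Real.rpow_le_rpow (norm_nonneg _) hrC hPQ.symm.nonneg
    _ = Q * H := Real.rpow_inv_rpow hQH hPQ.symm.ne_zero

end MomentProblem

section LegendreTransform

variable {X E ι : Type*} [NormedAddCommGroup E] [NormedSpace ℝ E] {e : ι → E} {P Q : ℝ}

/-- The Legendre transform of `‖·‖ ^ P / P` at the functional with values `γ i` at `e i`. Only
rational combinations of the `e i` are tested, to make it a countable supremum; truncating the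
tested values at `0` is harmless, since the empty combination contributes `0`. -/
noncomputable def legendreNormRpow (P : ℝ) (e : ι → E) (γ : ι → ℝ) : ℝ≥0∞ :=
  ⨆ i : Σ t : Finset ι, t → ℚ,
    ENNReal.ofReal (∑ n, (i.2 n : ℝ) * γ n - ‖∑ n, (i.2 n : ℝ) • e n‖ ^ P / P)

theorem ofReal_sub_le_legendreNormRpow (γ : ι → ℝ) {t : Finset ι} (a : t → ℚ) :
    ENNReal.ofReal (∑ n, (a n : ℝ) * γ n - ‖∑ n, (a n : ℝ) • e n‖ ^ P / P) ≤
      legendreNormRpow P e γ :=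
  le_iSup_of_le (ι := Σ t : Finset ι, t → ℚ) ⟨t, a⟩ le_rfl

theorem measurable_legendreNormRpow [Countable ι] [MeasurableSpace X] {g : ι → X → ℝ}
    (hg : ∀ n, Measurable (g n)) : Measurable fun x ↦ legendreNormRpow P e (g · x) :=
  .iSup fun i ↦ ((Finset.univ.measurable_fun_sum fun (n : i.1) _ ↦
    (hg n).const_mul (i.2 n : ℝ)).sub_const _).ennreal_ofReal

theorem exists_strongDual_enorm_rpow_le (hPQ : P.HolderConjugate Q)
    (he : DenseRange (Finsupp.linearCombination ℝ e)) {γ : ι → ℝ}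
    (hγ : legendreNormRpow P e γ ≠ ∞) :
    ∃ r : StrongDual ℝ E, (∀ i, r (e i) = γ i) ∧
      ‖r‖ₑ ^ Q ≤ ENNReal.ofReal Q * (legendreNormRpow P e γ + 1) := by
  obtain ⟨r, hr, hrQ⟩ := exists_strongDual_norm_rpow_le hPQ
    (H := (legendreNormRpow P e γ + 1).toReal)
    (ENNReal.toReal_pos (by simp) (ENNReal.add_ne_top.2 ⟨hγ, ENNReal.one_ne_top⟩)) he
    fun t a ↦ (ENNReal.ofReal_le_iff_le_toReal (by finiteness)).1
      ((ofReal_sub_le_legendreNormRpow γ a).trans le_self_add)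
  refine ⟨r, hr, ?_⟩
  calc ‖r‖ₑ ^ Q = ENNReal.ofReal (‖r‖ ^ Q) := by
        rw [← ofReal_norm, ENNReal.ofReal_rpow_of_nonneg (norm_nonneg _) hPQ.symm.nonneg]
    _ ≤ ENNReal.ofReal (Q * (legendreNormRpow P e γ + 1).toReal) := ENNReal.ofReal_le_ofReal hrQ
    _ = ENNReal.ofReal Q * (legendreNormRpow P e γ + 1) := by
        rw [ENNReal.ofReal_mul hPQ.symm.nonneg, ENNReal.ofReal_toReal (by finiteness)]

variable [MeasurableSpace X] {m : Measure X} [IsFiniteMeasure m] {p : ℝ≥0∞} [Fact (1 ≤ p)]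

theorem lintegral_legendreNormRpow_rnDeriv_le [Countable ι] (hp : p ≠ ∞)
    (hQ : p.toReal.HolderConjugate Q) (f : StrongDual ℝ (Lp E p m)) :
    ∫⁻ x, legendreNormRpow p.toReal e (fun n ↦ (dualSignedMeasure hp f (e n)).rnDeriv m x) ∂m ≤
      ENNReal.ofReal (‖f‖ ^ Q / Q) := by
  have hint (n : ι) : Integrable ((dualSignedMeasure hp f (e n)).rnDeriv m) m :=
    SignedMeasure.integrable_rnDeriv _ _
  refine lintegral_iSup_ofReal_sub_le hp hQ (i₀ := ⟨∅, 0⟩)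
    (fun i ↦ integrable_finsetSum _ fun n _ ↦ (hint n).const_mul _)
    (fun i ↦ Finset.univ.measurable_fun_sum fun n _ ↦
      (SignedMeasure.measurable_rnDeriv _ _).const_mul _) (fun i A hA ↦ ?_) fun x ↦ ?_
  · beta_reduce
    rw [integral_finsetSum _ fun (n : i.1) _ ↦ ((hint n).const_mul _).integrableOn]
    simp only [integral_const_mul, setIntegral_rnDeriv_dualSignedMeasure hp f _ hA,
      ← indicatorConstLpL_apply, map_sum, map_smul, smul_eq_mul]
  · simp [hQ.ne_zero]

end LegendreTransform

section Riesz

theorem stronglyMeasurable_strongDual_of_dense {X E ι : Type*} [MeasurableSpace X]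
    [NormedAddCommGroup E] [NormedSpace ℝ E] [SeparableSpace (StrongDual ℝ E)] [Countable ι]
    {e : ι → E} (he : DenseRange e) {r : X → StrongDual ℝ E}
    (hr : ∀ i, Measurable fun x ↦ r x (e i)) : StronglyMeasurable r := by
  borelize (StrongDual ℝ E)
  have : SecondCountableTopology (StrongDual ℝ E) :=
    UniformSpace.secondCountable_of_separable (StrongDual ℝ E)
  let J (f : StrongDual ℝ E) (i : ι) : ℝ := f (e i)
  have hJ : Continuous J := continuous_pi fun i ↦ (ContinuousLinearMap.apply ℝ ℝ (e i)).continuous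
  have hJinj : Function.Injective J := fun f g h ↦ ContinuousLinearMap.coeFn_injective <|
    he.equalizer f.continuous g.continuous h
  exact ((hJ.measurableEmbedding hJinj).measurable_comp_iff.1
    (measurable_pi_iff.2 hr)).stronglyMeasurable

variable {X E : Type*} [MeasurableSpace X] {m : Measure X} [IsFiniteMeasure m]
  [NormedAddCommGroup E] [NormedSpace ℝ E] {p q : ℝ≥0∞} [Fact (1 ≤ p)]

theorem exists_strongDual_density {ι : Type*} [Countable ι] {e : ι → E}
    (he : DenseRange (Finsupp.linearCombination ℝ e)) (hp : p ≠ ∞) {Q : ℝ}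
    (hQ : p.toReal.HolderConjugate Q) (f : StrongDual ℝ (Lp E p m)) :
    ∃ r : X → StrongDual ℝ E, (∀ i, Measurable fun x ↦ r x (e i)) ∧ ∫⁻ x, ‖r x‖ₑ ^ Q ∂m < ∞ ∧
      ∀ i A (hA : MeasurableSet A), ∫ x in A, r x (e i) ∂m =
        f (indicatorConstLp p hA (measure_ne_top m A) (e i)) := by
  let g (i : ι) : X → ℝ := (dualSignedMeasure hp f (e i)).rnDeriv m
  have hg (i : ι) : Measurable (g i) := SignedMeasure.measurable_rnDeriv _ _
  let L (x : X) : ℝ≥0∞ := legendreNormRpow p.toReal e (g · x)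
  have hL : Measurable L := measurable_legendreNormRpow hg
  have hLlt : ∫⁻ x, L x ∂m < ∞ :=
    (lintegral_legendreNormRpow_rnDeriv_le hp hQ f).trans_lt ENNReal.ofReal_lt_top
  have hmeas : MeasurableSet {x | L x ≠ ∞} := (hL (measurableSet_singleton ∞)).compl
  have hex (x : X) : ∃ r : StrongDual ℝ E, (∀ i, r (e i) = {x | L x ≠ ∞}.indicator (g i) x) ∧
      ‖r‖ₑ ^ Q ≤ ENNReal.ofReal Q * (L x + 1) := by
    by_cases hx : L x = ∞
    · refine ⟨0, fun i ↦ by simp [hx], ?_⟩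
      rw [enorm_zero (E := StrongDual ℝ E), ENNReal.zero_rpow_of_pos hQ.symm.pos]
      exact bot_le
    · obtain ⟨r, hr, hrQ⟩ := exists_strongDual_enorm_rpow_le hQ he hx
      exact ⟨r, fun i ↦ by rw [Set.indicator_of_mem (show x ∈ {x | L x ≠ ∞} from hx), hr], hrQ⟩
  choose r hr hrQ using hex
  refine ⟨r, fun i ↦ by simpa only [hr] using (hg i).indicator hmeas, ?_, fun i A hA ↦ ?_⟩
  · calc ∫⁻ x, ‖r x‖ₑ ^ Q ∂m ≤ ∫⁻ x, ENNReal.ofReal Q * (L x + 1) ∂m := lintegral_mono hrQ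
      _ = ENNReal.ofReal Q * (∫⁻ x, L x ∂m + m Set.univ) := by
        rw [lintegral_const_mul _ (hL.add_const 1), lintegral_add_right _ measurable_const,
          lintegral_one]
      _ < ∞ := by finiteness
  · rw [← setIntegral_rnDeriv_dualSignedMeasure hp f (e i) hA]
    refine integral_congr_ae (ae_restrict_of_ae ?_)
    filter_upwards [ae_lt_top hL hLlt.ne] with x hx
    rw [hr, Set.indicator_of_mem (show x ∈ {x | L x ≠ ∞} from hx.ne)]

theorem strongDual_Lp_ext_of_dense (hp : p ≠ ∞) {S : Set E} (hS : Dense S)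
    {F G : StrongDual ℝ (Lp E p m)}
    (h : ∀ c ∈ S, ∀ A (hA : MeasurableSet A), F (indicatorConstLp p hA (measure_ne_top m A) c) =
      G (indicatorConstLp p hA (measure_ne_top m A) c)) : F = G := by
  refine ContinuousLinearMap.ext fun u ↦ ?_
  induction u using Lp.induction hp with
  | indicatorConst c hA _ =>
    exact congrFun (Continuous.ext_on hS (F.comp (indicatorConstLpL m p hA)).continuous
      (G.comp (indicatorConstLpL m p hA)).continuous fun c hc ↦ h c hc _ hA) c
  | add _ _ _ hFGu hFGv => rw [map_add, map_add, hFGu, hFGv]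
  | isClosed => exact isClosed_eq F.continuous G.continuous

theorem lpPairing_toLp_indicatorConstLp [Fact (1 ≤ q)] [q.HolderConjugate p]
    {r : X → StrongDual ℝ E} (hr : MemLp r q m) {A : Set X} (hA : MeasurableSet A) (c : E) :
    (ContinuousLinearMap.id ℝ (StrongDual ℝ E)).lpPairing m q p hr.toLp
      (indicatorConstLp p hA (measure_ne_top m A) c) = ∫ x in A, r x c ∂m := by
  rw [ContinuousLinearMap.lpPairing_eq_integral, ← integral_indicator hA]
  refine integral_congr_ae ?_
  filter_upwards [hr.coeFn_toLp, indicatorConstLp_coeFn (p := p) (hs := hA)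
    (hμs := measure_ne_top m A) (c := c)] with x hx hx'
  by_cases hxA : x ∈ A <;> simp [hx, hx', hxA]

theorem lpPairing_surjective [SeparableSpace (StrongDual ℝ E)] [Fact (1 ≤ q)]
    [q.HolderConjugate p] (hp : p ≠ ∞) (hq : q ≠ ∞) :
    Function.Surjective ((ContinuousLinearMap.id ℝ (StrongDual ℝ E)).lpPairing m q p) := by
  intro f
  have : SeparableSpace E := separableSpace_of_separableSpace_strongDual (𝕜 := ℝ)
  have he : DenseRange (Finsupp.linearCombination ℝ (denseSeq E)) :=
    (denseRange_denseSeq E).mono <| Set.range_subset_iff.2 fun n ↦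
      ⟨Finsupp.single n 1, by rw [Finsupp.linearCombination_single, one_smul]⟩
  have : p.HolderConjugate q := .symm
  obtain ⟨r, hrm, hrq, hr⟩ := exists_strongDual_density he hp
    (ENNReal.HolderConjugate.toReal_of_ne_top hp hq) f
  have hrLp : MemLp r q m :=
    ⟨(stronglyMeasurable_strongDual_of_dense (denseRange_denseSeq E) hrm).aestronglyMeasurable,
      (eLpNorm_lt_top_iff_lintegral_rpow_enorm_lt_top (zero_lt_one.trans_le Fact.out).ne' hq).2 hrq⟩
  refine ⟨hrLp.toLp, strongDual_Lp_ext_of_dense hp (denseRange_denseSeq E) ?_⟩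
  rintro _ ⟨n, rfl⟩ A hA
  rw [lpPairing_toLp_indicatorConstLp hrLp hA, hr]

end Riesz

section LpReflexivity

variable {X E : Type*} [MeasurableSpace X] {m : Measure X}
  [NormedAddCommGroup E] [NormedSpace ℝ E] {p : ℝ≥0∞}

theorem norm_subtypeL_compLp {S : Submodule ℝ E} (v : Lp S p m) :
    ‖S.subtypeL.compLp v‖ = ‖v‖ := by
  rw [Lp.norm_def, Lp.norm_def]
  refine congrArg ENNReal.toReal (eLpNorm_congr_norm_ae ?_)
  filter_upwards [S.subtypeL.coeFn_compLp v] with x hx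
  rw [hx]
  rfl

theorem exists_subtypeL_compLp_eq {S : Submodule ℝ E} {u : Lp E p m} (hu : ∀ x, u x ∈ S) :
    ∃ v : Lp S p m, S.subtypeL.compLp v = u := by
  have hv : MemLp (fun x ↦ (⟨u x, hu x⟩ : S)) p m :=
    (Lp.memLp u).congr_norm ((Embedding.comp_stronglyMeasurable_iff .subtypeVal).1
      (Lp.stronglyMeasurable u)).aestronglyMeasurable (.of_forall fun _ ↦ rfl)
  refine ⟨hv.toLp, Lp.ext ?_⟩
  filter_upwards [S.subtypeL.coeFn_compLp hv.toLp, hv.coeFn_toLp] with x hx hx'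
  rw [hx, hx']
  rfl

theorem exists_isClosed_separableSpace_forall_mem (u : ℕ → Lp E p m) :
    ∃ S : Submodule ℝ E, IsClosed (S : Set E) ∧ SeparableSpace S ∧ ∀ n x, u n x ∈ S := by
  have hs : IsSeparable (⋃ n, Set.range (u n)) :=
    .iUnion fun n ↦ (Lp.stronglyMeasurable (u n)).isSeparable_range
  refine ⟨(Submodule.span ℝ (⋃ n, Set.range (u n))).topologicalClosure,
    Submodule.isClosed_topologicalClosure _, hs.span.closure.separableSpace, fun n x ↦ ?_⟩
  exact Submodule.le_topologicalClosure _ (Submodule.subset_span (Set.mem_iUnion.2 ⟨n, x, rfl⟩))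

variable [IsFiniteMeasure m] [Fact (1 ≤ p)]

theorem IsReflexiveSpace.Lp_of_separableSpace [SeparableSpace E] (h : IsReflexiveSpace ℝ E)
    {q : ℝ≥0∞} [Fact (1 ≤ q)] [q.HolderConjugate p] (hp : p ≠ ∞) (hq : q ≠ ∞) :
    IsReflexiveSpace ℝ (Lp E p m) := by
  have : p.HolderConjugate q := .symm
  have : SeparableSpace (StrongDual ℝ (StrongDual ℝ E)) :=
    h.denseRange.separableSpace (inclusionInDoubleDual ℝ E).continuous
  have : SeparableSpace (StrongDual ℝ E) := separableSpace_of_separableSpace_strongDual (𝕜 := ℝ)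
  let e := LinearIsometryEquiv.ofSurjective (inclusionInDoubleDualLi (E := E) ℝ) h
  let T : StrongDual ℝ (StrongDual ℝ E) →L[ℝ] E := e.symm.toContinuousLinearEquiv
  have hT (y : StrongDual ℝ (StrongDual ℝ E)) (b : StrongDual ℝ E) : b (T y) = y b :=
    DFunLike.congr_fun (e.apply_symm_apply y) b
  let R := (ContinuousLinearMap.id ℝ (StrongDual ℝ E)).lpPairing m q p
  have hR : Function.Surjective R := lpPairing_surjective hp hq
  intro Ψ
  obtain ⟨G, hG⟩ := lpPairing_surjective (E := StrongDual ℝ E) (m := m) hq hp (Ψ.comp R)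
  refine ⟨T.compLp G, ContinuousLinearMap.ext fun f ↦ ?_⟩
  obtain ⟨g, rfl⟩ := hR f
  calc R g (T.compLp G) = ∫ x, g x (T.compLp G x) ∂m :=
        ContinuousLinearMap.lpPairing_eq_integral _ _ _
    _ = ∫ x, G x (g x) ∂m := integral_congr_ae <| (T.coeFn_compLp G).mono fun x hx ↦ by
        simp only [hx, hT]
    _ = Ψ (R g) := by
        rw [← ContinuousLinearMap.comp_apply, ← hG, ContinuousLinearMap.lpPairing_eq_integral]
        rfl

theorem IsReflexiveSpace.Lp_of_one_lt (h : IsReflexiveSpace ℝ E) (hp₁ : 1 < p) (hp : p ≠ ∞) :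
    IsReflexiveSpace ℝ (Lp E p m) := by
  have := h.completeSpace
  let q := p.conjExponent
  have : p.HolderConjugate q := inferInstance
  have : q.HolderConjugate p := .symm
  have hq : q ≠ ∞ := fun hq ↦ hp₁.ne' ((ENNReal.HolderConjugate.eq_top_iff_eq_one q p).1 hq)
  have : Fact (1 ≤ q) := ⟨ENNReal.HolderConjugate.one_le q p⟩
  refine .of_forall_seq_mem fun u ↦ ?_
  obtain ⟨S, hS, _, huS⟩ := exists_isClosed_separableSpace_forall_mem u
  have hemb : IsEmbedding (S.subtypeL.compLpL p m) :=
    (AddMonoidHomClass.isometry_of_norm _ norm_subtypeL_compLp).isEmbedding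
  exact ⟨(S.subtypeL.compLpL p m).range, (isReflexiveSpace_range_iff hemb).2
    ((h.of_isClosed hS).Lp_of_separableSpace hp hq), fun n ↦ exists_subtypeL_compLp_eq (huS n)⟩

variable [NeZero m]

theorem isEmbedding_constL : IsEmbedding (Lp.constL p m ℝ : E →L[ℝ] Lp E p m) := by
  let r : NNReal := ⟨m.real Set.univ ^ (1 / p.toReal), by positivity⟩
  have hr : 0 < (r : ℝ) := Real.rpow_pos_of_pos measureReal_univ_pos _
  have hnorm (c : E) : ‖Lp.constL p m ℝ c‖ = ‖c‖ * r :=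
    Lp.norm_const p m c (zero_lt_one.trans_le Fact.out).ne'
  have hbound (c : E) : ‖c‖ ≤ r⁻¹ * ‖Lp.constL p m ℝ c‖ := by
    rw [hnorm, NNReal.coe_inv, inv_mul_eq_div, mul_div_cancel_right₀ _ hr.ne']
  exact ((Lp.constL (E := E) p m ℝ).antilipschitz_of_bound hbound).isEmbedding
    (Lp.constL p m ℝ).continuous

theorem isClosed_range_constL :
    IsClosed (Set.range (Lp.constL p m ℝ : E →L[ℝ] Lp E p m)) := by
  refine IsSeqClosed.isClosed fun v u hv hvu ↦ ?_
  choose c hc using hv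
  obtain ⟨k, -, hk⟩ := (tendstoInMeasure_of_tendsto_Lp hvu).exists_seq_tendsto_ae
  have hcoe : ∀ᵐ x ∂m, ∀ n, v n x = c n := ae_all_iff.2 fun n ↦ by
    rw [← hc]
    exact Lp.coeFn_const ..
  have hlim : ∀ᵐ x ∂m, Tendsto (fun n ↦ c (k n)) atTop (𝓝 (u x)) := by
    filter_upwards [hk, hcoe] with x hx hcx
    simpa only [hcx] using hx
  obtain ⟨x₀, hx₀⟩ := hlim.exists
  refine ⟨u x₀, Lp.ext ?_⟩
  filter_upwards [Lp.coeFn_const (p := p) (μ := m) (c := u x₀), hlim] with x hconst hx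
  exact hconst.trans (tendsto_nhds_unique hx₀ hx)

theorem IsReflexiveSpace.of_Lp (h : IsReflexiveSpace ℝ (Lp E p m)) : IsReflexiveSpace ℝ E :=
  (isReflexiveSpace_range_iff isEmbedding_constL).1 (h.of_isClosed isClosed_range_constL)

end LpReflexivity

theorem reflexive_iff_reflexive_Lp_general {X B : Type*} [MeasurableSpace X] {m : Measure X}
    [IsFiniteMeasure m] [NeZero m] [NormedAddCommGroup B] [NormedSpace ℝ B] {p : ℝ≥0∞}
    [Fact (1 ≤ p)] (hp₁ : 1 < p) (hp : p ≠ ∞) :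
    Function.Surjective (inclusionInDoubleDual ℝ B) ↔
      Function.Surjective (inclusionInDoubleDual ℝ (Lp B p m)) :=
  ⟨fun h ↦ IsReflexiveSpace.Lp_of_one_lt h hp₁ hp, IsReflexiveSpace.of_Lp⟩

/-- A Banach space `B` is reflexive if and only if the Lebesgue–Bochner space `L^p(m;B)` over a
probability space is reflexive for every `p ∈ (1,∞)` (reflexivity expressed via surjectivity
of the canonical inclusion into the double dual). -/
theorem reflexive_iff_reflexive_Lp
    {X B : Type*} [MeasurableSpace X] (m : Measure X) [IsProbabilityMeasure m]
    [NormedAddCommGroup B] [NormedSpace ℝ B] [CompleteSpace B] :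
    Function.Surjective (inclusionInDoubleDual ℝ B) ↔
      ∀ (p : ℝ≥0∞) (_ : Fact (1 ≤ p)), 1 < p → p ≠ ∞ →
        Function.Surjective (inclusionInDoubleDual ℝ (Lp B p m)) :=
  ⟨fun h _ _ hp₁ hp ↦ (reflexive_iff_reflexive_Lp_general hp₁ hp).1 h, fun h ↦
    (reflexive_iff_reflexive_Lp_general ENNReal.one_lt_two ENNReal.ofNat_ne_top).2
      (h 2 ⟨one_le_two⟩ ENNReal.one_lt_two ENNReal.ofNat_ne_top)⟩
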